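/- arXiv:math/0601361 — 2 statements merged into one kernel-verified Lean document; each statement's English description precedes it below -/
import Mathlib

section
/- For all integers n and p with 2 < p < n−1, the distinguishing number of the p-th power of the n-dimensional hypercube satisfies D(Q_n^p) = 2. -/
/-- The p-th power of a graph `G`: distinct vertices are adjacent iff their
distance in `G` satisfies `0 < d_G(v,w) ≤ p` (in particular they are reachable). -/
def gpow {V : Type*} (G : SimpleGraph V) (p : ℕ) : SimpleGraph V where
  Adj v w := v ≠ w ∧ G.Reachable v w ∧ G.dist v w ≤ p
  symm := ⟨fun v w h => ⟨h.1.symm, h.2.1.symm, by rw [SimpleGraph.dist_comm]; exact h.2.2⟩⟩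
  loopless := ⟨fun v h => h.1 rfl⟩

/-- A permutation of the vertices is an automorphism of `G` iff it preserves adjacency. -/
def IsAuto {V : Type*} (G : SimpleGraph V) (π : Equiv.Perm V) : Prop :=
  ∀ v w, G.Adj (π v) (π w) ↔ G.Adj v w

/-- A coloring `c : V → Fin r` is distinguishing if no nontrivial automorphism preserves it. -/
def IsDistinguishing {V : Type*} (G : SimpleGraph V) {r : ℕ} (c : V → Fin r) : Prop :=
  ∀ π : Equiv.Perm V, IsAuto G π → (∀ v, c (π v) = c v) → π = 1

/-- The distinguishing number `D(G)`: the least `r` admitting a distinguishing `r`-coloring. -/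
noncomputable def distNum {V : Type*} (G : SimpleGraph V) : ℕ :=
  sInf {r : ℕ | ∃ c : V → Fin r, IsDistinguishing G c}

/-- The `n`-dimensional hypercube: vertices are `{0,1}^n`, adjacent iff they differ in
exactly one coordinate. -/
def Q (n : ℕ) : SimpleGraph (Fin n → Bool) where
  Adj v w := (Finset.univ.filter fun i => v i ≠ w i).card = 1
  symm := by
    constructor
    intro v w h
    rw [show (Finset.univ.filter fun i => w i ≠ v i) = (Finset.univ.filter fun i => v i ≠ w i) from by
      apply Finset.filter_congr; intro i _; simp [ne_comm]]
    exact h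
  loopless := by constructor; intro v h; simp at h

/-!
For a pair of vertices, count the common points of the Hamming balls of radius `p` around them. This
number depends only on the distance of the centres, is nonincreasing in it, and drops strictly from
distance `2` to distance `3` if `p + 2 ≤ n`. Hence every automorphism of `Q_n^p` is an automorphism
of `Q_n^2`, and as such preserves `⌈d/2⌉` for the Hamming distance `d`.

Mark the chain `00…0, 10…0, …, 11…1` together with the antipode of `1…100`. The marked vertices
induce in `Q_n^2` the square of a path with a pendant vertex at one end. This graph is rigid, so an
automorphism preserving the marking fixes the chain pointwise. The numbers `⌈d(x, cᵢ)/2⌉` for `cᵢ`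
in the chain determine `x` up to antipode, so each moved vertex is sent to its antipode; this is
impossible for a vertex adjacent to a fixed one, while the origin is fixed.
-/

section DistinguishingNumber

variable {V : Type*} {G : SimpleGraph V}

theorem IsAuto.symm {π : Equiv.Perm V} (hπ : IsAuto G π) : IsAuto G π.symm := fun v w => by
  simpa only [Equiv.apply_symm_apply] using (hπ (π.symm v) (π.symm w)).symm

theorem exists_isDistinguishing_two {S : Set V}
    (hS : ∀ π : Equiv.Perm V, IsAuto G π → (∀ v, π v ∈ S ↔ v ∈ S) → π = 1) :
    ∃ c : V → Fin 2, IsDistinguishing G c := by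
  classical
  refine ⟨fun v => if v ∈ S then 1 else 0, fun π hπ hc => hS π hπ fun v => ?_⟩
  specialize hc v
  by_cases hπv : π v ∈ S <;> by_cases hv : v ∈ S <;> simp_all

theorem IsDistinguishing.one_lt {r : ℕ} {c : V → Fin r} (hc : IsDistinguishing G c)
    {τ : Equiv.Perm V} (hτ : IsAuto G τ) (hτ_ne : τ ≠ 1) : 1 < r := by
  by_contra! hr
  have : Subsingleton (Fin r) := Fin.subsingleton_iff_le_one.2 hr
  exact hτ_ne (hc τ hτ fun _ => Subsingleton.elim _ _)

theorem distNum_eq_two {S : Set V}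
    (hS : ∀ π : Equiv.Perm V, IsAuto G π → (∀ v, π v ∈ S ↔ v ∈ S) → π = 1)
    {τ : Equiv.Perm V} (hτ : IsAuto G τ) (hτ_ne : τ ≠ 1) : distNum G = 2 :=
  le_antisymm (Nat.sInf_le (exists_isDistinguishing_two hS))
    (le_csInf ⟨2, exists_isDistinguishing_two hS⟩ fun _ ⟨_, hc⟩ => hc.one_lt hτ hτ_ne)

end DistinguishingNumber

namespace Hypercube

section HammingDist

variable {ι κ : Type*} [Fintype ι] [Fintype κ]

theorem exists_hammingDist_eq_and_add_eq {β : ι → Type*} [∀ i, DecidableEq (β i)]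
    {x y : ∀ i, β i} {k : ℕ} (hk : k ≤ hammingDist x y) :
    ∃ u, hammingDist x u = k ∧ k + hammingDist u y = hammingDist x y := by
  classical
  obtain ⟨s, hs, rfl⟩ := Finset.exists_subset_card_eq hk
  have hne : ∀ i ∈ s, x i ≠ y i := fun i hi => (Finset.mem_filter.1 (hs hi)).2
  refine ⟨s.piecewise y x, congrArg Finset.card ?_, ?_⟩
  · ext i
    by_cases hi : i ∈ s <;> simp [hi, hne]
  · have hsdiff : ({i | s.piecewise y x i ≠ y i} : Finset ι) =
        ({i | x i ≠ y i} : Finset ι) \ s := by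
      ext i
      by_cases hi : i ∈ s <;> simp [hi]
    rw [hammingDist, hsdiff, add_comm, Finset.card_sdiff_add_card_eq_card hs, hammingDist]

theorem hammingDist_comp_equiv {β : Type*} [DecidableEq β] (σ : κ ≃ ι) (x y : ι → β) :
    hammingDist (x ∘ σ) (y ∘ σ) = hammingDist x y :=
  Finset.card_equiv σ fun _ => by simp

theorem hammingDist_compl (x y : ι → Bool) : hammingDist xᶜ yᶜ = hammingDist x y :=
  hammingDist_comp (fun _ => not) fun _ => Bool.not_injective

theorem hammingDist_compl_left_add (x y : ι → Bool) :
    hammingDist xᶜ y + hammingDist x y = Fintype.card ι := by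
  have heq : ({i | xᶜ i ≠ y i} : Finset ι) = ({i | ¬x i ≠ y i} : Finset ι) := by
    ext i
    simp
  rw [add_comm, hammingDist, hammingDist, heq, Finset.card_filter_add_card_filter_not,
    Finset.card_univ]

theorem exists_isometry_of_hammingDist_eq {x w x' w' : ι → Bool}
    (h : hammingDist x w = hammingDist x' w') :
    ∃ T : (ι → Bool) → (ι → Bool),
      (∀ a b, hammingDist (T a) (T b) = hammingDist a b) ∧ T x = x' ∧ T w = w' := by
  obtain ⟨σ, hσ⟩ := Equiv.Perm.exists_map_finset_eq
    ({i | x' i ≠ w' i} : Finset ι) ({i | x i ≠ w i} : Finset ι) h.symm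
  have hdiff (i : ι) : x' i = w' i ↔ x (σ i) = w (σ i) := by
    have := Finset.mem_map' σ.toEmbedding (a := i) (s := {i | x' i ≠ w' i})
    simpa [hσ, not_iff_not, iff_comm] using this
  refine ⟨fun y i => (x' i ^^ x (σ i)) ^^ y (σ i), fun a b => ?_, ?_, ?_⟩
  · exact (hammingDist_comp (fun i => xor (x' i ^^ x (σ i)))
      fun i _ _ => Bool.xor_right_inj.1).trans (hammingDist_comp_equiv σ a b)
  · funext i
    simp
  · funext i
    have hxor : ∀ a b c d : Bool, (a = b ↔ c = d) → ((a ^^ c) ^^ d) = b := by decide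
    exact hxor _ _ _ _ (hdiff i)

end HammingDist

section Flip

variable {ι : Type*} [DecidableEq ι]

/-- The neighbour of the vertex `x` of the cube along coordinate `j`. -/
def flip (x : ι → Bool) (j : ι) : ι → Bool := Function.update x j (!x j)

@[simp] theorem flip_apply_self (x : ι → Bool) (j : ι) : flip x j j = !x j := by simp [flip]

@[simp] theorem flip_apply_of_ne (x : ι → Bool) {i j : ι} (h : i ≠ j) : flip x j i = x i := by
  simp [flip, h]

@[simp] theorem flip_flip (x : ι → Bool) (j : ι) : flip (flip x j) j = x := by simp [flip]

theorem flip_injective (j : ι) : Function.Injective fun x : ι → Bool => flip x j :=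
  Function.LeftInverse.injective (g := fun x => flip x j) fun x => flip_flip x j

variable [Fintype ι]

theorem hammingDist_flip_of_eq {x w : ι → Bool} {j : ι} (h : x j = w j) :
    hammingDist x (flip w j) = hammingDist x w + 1 := by
  have hinsert : ({i | x i ≠ flip w j i} : Finset ι) =
      insert j ({i | x i ≠ w i} : Finset ι) := by
    ext i
    by_cases hi : i = j
    · subst hi; simp [h]
    · simp [hi]
  rw [hammingDist, hinsert, Finset.card_insert_of_notMem (by simp [h]), hammingDist]

theorem hammingDist_flip_of_ne {x w : ι → Bool} {j : ι} (h : x j ≠ w j) :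
    hammingDist x (flip w j) + 1 = hammingDist x w := by
  have hflip : x j = flip w j j := by simpa using Bool.eq_not.2 h
  simpa using (hammingDist_flip_of_eq hflip).symm

theorem hammingDist_flip_flip (x y : ι → Bool) (j : ι) :
    hammingDist (flip x j) (flip y j) = hammingDist x y := by
  have hflip (z : ι → Bool) : flip z j = fun i => (if i = j then not else id) (z i) := by
    funext i
    by_cases hi : i = j
    · subst hi; simp
    · simp [hi]
  rw [hflip, hflip]
  refine hammingDist_comp _ fun i => ?_
  split_ifs
  exacts [Bool.not_injective, Function.injective_id]

end Flip

section CommonBall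

variable {ι : Type*} [Fintype ι] [DecidableEq ι] {p : ℕ} {x w x' w' : ι → Bool}

/-- The common points of the two Hamming balls of radius `p` centred at `x` and `w`. -/
def commonBall (p : ℕ) (x w : ι → Bool) : Finset (ι → Bool) :=
  {z | hammingDist x z ≤ p ∧ hammingDist w z ≤ p}

theorem mem_commonBall {z : ι → Bool} :
    z ∈ commonBall p x w ↔ hammingDist x z ≤ p ∧ hammingDist w z ≤ p := by
  simp [commonBall]

theorem card_commonBall_le_of_injective {T : (ι → Bool) → (ι → Bool)} (hinj : T.Injective)
    (hT : ∀ a b, hammingDist a b ≤ p → hammingDist (T a) (T b) ≤ p) (x w : ι → Bool) :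
    (commonBall p x w).card ≤ (commonBall p (T x) (T w)).card :=
  Finset.card_le_card_of_injOn T
    (fun _ hz => mem_commonBall.2 ((mem_commonBall.1 hz).imp (hT _ _) (hT _ _))) hinj.injOn

theorem card_commonBall_le_of_hammingDist_eq (h : hammingDist x w = hammingDist x' w') :
    (commonBall p x w).card ≤ (commonBall p x' w').card := by
  obtain ⟨T, hT, rfl, rfl⟩ := exists_isometry_of_hammingDist_eq h
  have hinj : T.Injective := fun a b hab => by
    rw [← hammingDist_eq_zero, ← hT, hab, hammingDist_self]
  exact card_commonBall_le_of_injective hinj (fun a b hab => (hT a b).trans_le hab) x w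

theorem flip_mem_commonBall_sdiff {j : ι} (h : x j = w j) {y : ι → Bool}
    (hy : y ∈ commonBall p x (flip w j) \ commonBall p x w) :
    flip y j ∈ commonBall p x w \ commonBall p x (flip w j) := by
  obtain ⟨hmem, hnotMem⟩ := Finset.mem_sdiff.1 hy
  obtain ⟨hxy, hwy⟩ := mem_commonBall.1 hmem
  have hwy' : p < hammingDist w y := not_le.1 fun h => hnotMem (mem_commonBall.2 ⟨hxy, h⟩)
  have hyj : y j ≠ w j := fun hyj => by
    have := hammingDist_flip_of_eq hyj
    rw [hammingDist_comm y, hammingDist_comm y] at this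
    omega
  have hxflip : hammingDist x (flip y j) + 1 = hammingDist x y :=
    hammingDist_flip_of_ne (h ▸ hyj.symm)
  have hwflip : hammingDist w (flip y j) = hammingDist (flip w j) y := by
    simpa using hammingDist_flip_flip (flip w j) y j
  refine Finset.mem_sdiff.2 ⟨mem_commonBall.2 ⟨by omega, by omega⟩, fun hmem' => ?_⟩
  have := (mem_commonBall.1 hmem').2
  rw [hammingDist_flip_flip] at this
  omega

theorem card_commonBall_flip_le {j : ι} (h : x j = w j) :
    (commonBall p x (flip w j)).card ≤ (commonBall p x w).card :=
  Finset.card_sdiff_le_card_sdiff_iff.1 <| Finset.card_le_card_of_injOn (flip · j)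
    (fun _ hy => flip_mem_commonBall_sdiff h hy) (flip_injective j).injOn

theorem card_commonBall_flip_lt {j : ι} (h : x j = w j) {z : ι → Bool} (hz : z j = w j)
    (hxz : hammingDist x z = p) (hwz : hammingDist w z = p) :
    (commonBall p x (flip w j)).card < (commonBall p x w).card := by
  have hwflip : hammingDist (flip w j) z = p + 1 := by
    rw [hammingDist_comm, hammingDist_flip_of_eq hz, hammingDist_comm, hwz]
  have hmem : z ∈ commonBall p x w \ commonBall p x (flip w j) := by
    simp [mem_commonBall, hxz, hwz, hwflip]
  refine Finset.card_sdiff_lt_card_sdiff_iff.1 <|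
    (Finset.card_le_card_of_injOn (flip · j) (fun y hy => ?_) (flip_injective j).injOn).trans_lt
      (Finset.card_erase_lt_of_mem hmem)
  refine Finset.mem_erase.2 ⟨?_, flip_mem_commonBall_sdiff h hy⟩
  rintro rfl
  have hxy : hammingDist x y = p + 1 := by
    rw [← hxz, ← hammingDist_flip_of_eq (h.trans hz.symm), flip_flip]
  have := (mem_commonBall.1 (Finset.mem_sdiff.1 hy).1).1
  omega

theorem card_commonBall_anti {x w x' w' : ι → Bool} (h : hammingDist x w ≤ hammingDist x' w') :
    (commonBall p x' w').card ≤ (commonBall p x w).card := by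
  obtain h | h := h.eq_or_lt
  · exact card_commonBall_le_of_hammingDist_eq h.symm
  · obtain ⟨j, hj⟩ := Function.ne_iff.1 (hammingDist_pos.1 (pos_of_gt h))
    have hd := hammingDist_flip_of_ne hj
    calc (commonBall p x' w').card
      _ = (commonBall p x' (flip (flip w' j) j)).card := by rw [flip_flip]
      _ ≤ (commonBall p x' (flip w' j)).card :=
        card_commonBall_flip_le (by simpa using Bool.eq_not.2 hj)
      _ ≤ (commonBall p x w).card := card_commonBall_anti (by omega)
termination_by hammingDist x' w'

theorem exists_hammingDist_eq_of_flip_flip (x : ι → Bool) {a b c : ι} (hab : a ≠ b) (hac : a ≠ c)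
    (hbc : b ≠ c) (hp : 0 < p) (hpn : p + 2 ≤ Fintype.card ι) :
    ∃ z, z c = x c ∧ hammingDist x z = p ∧ hammingDist (flip (flip x a) b) z = p := by
  obtain ⟨T, hT, hTcard⟩ := Finset.exists_subset_card_eq (s := ({a, b, c} : Finset ι)ᶜ) (n := p - 1)
    (by rw [Finset.card_compl, Finset.card_eq_three.2 ⟨a, b, c, hab, hac, hbc, rfl⟩]; omega)
  have haT : a ∉ T := fun h => by simpa using hT h
  have hbT : b ∉ T := fun h => by simpa using hT h
  have hcT : c ∉ T := fun h => by simpa using hT h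
  have hcard {i : ι} (hi : i ∉ T) : (insert i T).card = p := by
    rw [Finset.card_insert_of_notMem hi]; omega
  refine ⟨fun i => if i ∈ insert a T then !x i else x i, by simp [hac.symm, hcT], ?_, ?_⟩
  · rw [← hcard haT, hammingDist]
    congr 1
    ext i
    by_cases hi : i = a <;> by_cases hiT : i ∈ T <;> simp [hi, hiT]
  · rw [← hcard hbT, hammingDist]
    congr 1
    ext i
    by_cases hia : i = a
    · subst hia; simp [hab, haT]
    · by_cases hib : i = b
      · subst hib; simp [hia, hbT]
      · by_cases hi : i ∈ T <;> simp [hia, hib, hi]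

theorem card_commonBall_lt (hp : 0 < p) (hpn : p + 2 ≤ Fintype.card ι)
    (h : hammingDist x w ≤ 2) (h' : 2 < hammingDist x' w') :
    (commonBall p x' w').card < (commonBall p x w).card := by
  obtain ⟨a, b, c, hab, hac, hbc⟩ := Fintype.two_lt_card_iff.1 (show 2 < Fintype.card ι by omega)
  obtain ⟨z, hzc, hxz, huz⟩ := exists_hammingDist_eq_of_flip_flip x' hab hac hbc hp hpn
  set u := flip (flip x' a) b
  have huc : x' c = u c := by simp [u, hac.symm, hbc.symm]
  have hxu : hammingDist x' u = 2 := by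
    rw [hammingDist_flip_of_eq (by simp [hab.symm]), hammingDist_flip_of_eq rfl, hammingDist_self]
  calc (commonBall p x' w').card
    _ ≤ (commonBall p x' (flip u c)).card :=
      card_commonBall_anti (by rw [hammingDist_flip_of_eq huc]; omega)
    _ < (commonBall p x' u).card := card_commonBall_flip_lt huc (hzc.trans huc) hxz huz
    _ ≤ (commonBall p x w).card := card_commonBall_anti (by omega)

omit [DecidableEq ι] in
theorem hammingDist_map_le_two {T : (ι → Bool) → (ι → Bool)} (hinj : T.Injective) (hp : 0 < p)
    (hpn : p + 2 ≤ Fintype.card ι)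
    (hT : ∀ a b, hammingDist a b ≤ p → hammingDist (T a) (T b) ≤ p) {x w : ι → Bool}
    (h : hammingDist x w ≤ 2) : hammingDist (T x) (T w) ≤ 2 := by
  classical
  by_contra! hlt
  exact (card_commonBall_lt hp hpn h hlt).not_ge (card_commonBall_le_of_injective hinj hT x w)

end CommonBall

section Automorphism

variable {n p : ℕ}

theorem hammingDist_le_length {x y : Fin n → Bool} (q : (Q n).Walk x y) :
    hammingDist x y ≤ q.length := by
  induction q with
  | nil => simp
  | @cons x u y hadj q ih =>
    have hxu : hammingDist x u = 1 := hadj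
    have := hammingDist_triangle x u y
    rw [SimpleGraph.Walk.length_cons]
    omega

theorem exists_walk_length_eq_hammingDist (x y : Fin n → Bool) :
    ∃ q : (Q n).Walk x y, q.length = hammingDist x y := by
  induction hd : hammingDist x y generalizing x with
  | zero =>
    obtain rfl := hammingDist_eq_zero.1 hd
    exact ⟨.nil, rfl⟩
  | succ d ih =>
    obtain ⟨u, hxu, huy⟩ := exists_hammingDist_eq_and_add_eq (show 1 ≤ hammingDist x y by omega)
    obtain ⟨q, hq⟩ := ih u (by omega)
    have hadj : (Q n).Adj x u := hxu
    exact ⟨.cons hadj q, by rw [SimpleGraph.Walk.length_cons, hq]⟩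

theorem Q_connected (n : ℕ) : (Q n).Connected :=
  .mk fun x y => ⟨(exists_walk_length_eq_hammingDist x y).choose⟩

theorem Q_dist (x y : Fin n → Bool) : (Q n).dist x y = hammingDist x y := by
  obtain ⟨q, hq⟩ := exists_walk_length_eq_hammingDist x y
  obtain ⟨r, hr⟩ := (Q_connected n).exists_walk_length_eq_dist x y
  exact le_antisymm (hq ▸ SimpleGraph.dist_le q) (hr ▸ hammingDist_le_length r)

theorem isAuto_gpow_Q_iff {π : Equiv.Perm (Fin n → Bool)} :
    IsAuto (gpow (Q n) p) π ↔ ∀ x y, hammingDist (π x) (π y) ≤ p ↔ hammingDist x y ≤ p := by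
  refine forall₂_congr fun x y => ?_
  by_cases hxy : x = y
  · simp [hxy]
  · simp [gpow, hxy, (Q_connected n).preconnected _ _, Q_dist]

theorem isAuto_gpow_Q_of_imp {π : Equiv.Perm (Fin n → Bool)}
    (hπ : ∀ x y, hammingDist x y ≤ p → hammingDist (π x) (π y) ≤ p)
    (hπ_symm : ∀ x y, hammingDist x y ≤ p → hammingDist (π.symm x) (π.symm y) ≤ p) :
    IsAuto (gpow (Q n) p) π :=
  isAuto_gpow_Q_iff.2 fun x y => ⟨fun h => by simpa using hπ_symm _ _ h, hπ x y⟩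

theorem isAuto_gpow_Q_two {π : Equiv.Perm (Fin n → Bool)} (hp : 0 < p) (hpn : p + 2 ≤ n)
    (hπ : IsAuto (gpow (Q n) p) π) : IsAuto (gpow (Q n) 2) π := by
  have hcard : p + 2 ≤ Fintype.card (Fin n) := by rwa [Fintype.card_fin]
  exact isAuto_gpow_Q_of_imp
    (fun _ _ => hammingDist_map_le_two π.injective hp hcard
      fun x y => (isAuto_gpow_Q_iff.1 hπ x y).2)
    (fun _ _ => hammingDist_map_le_two π.symm.injective hp hcard
      fun x y => (isAuto_gpow_Q_iff.1 hπ.symm x y).2)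

theorem hammingDist_map_le_mul {ι : Type*} [Fintype ι] {β : ι → Type*} [∀ i, DecidableEq (β i)]
    {T : (∀ i, β i) → ∀ i, β i} {k : ℕ}
    (hT : ∀ x y, hammingDist x y ≤ k → hammingDist (T x) (T y) ≤ k) (m : ℕ) (x y : ∀ i, β i)
    (h : hammingDist x y ≤ k * m) : hammingDist (T x) (T y) ≤ k * m := by
  induction m generalizing x with
  | zero =>
    obtain rfl : x = y := hammingDist_eq_zero.1 (by simpa using h)
    simp
  | succ m ih =>
    rw [mul_add_one] at h ⊢
    obtain hk | hk := le_total (hammingDist x y) k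
    · exact (hT x y hk).trans (Nat.le_add_left k _)
    · obtain ⟨u, hxu, huy⟩ := exists_hammingDist_eq_and_add_eq hk
      have := hT x u hxu.le
      have := ih u (by omega)
      have := hammingDist_triangle (T x) (T u) (T y)
      omega

theorem isAuto_gpow_Q_mul {π : Equiv.Perm (Fin n → Bool)} (hπ : IsAuto (gpow (Q n) p) π) (m : ℕ) :
    IsAuto (gpow (Q n) (p * m)) π :=
  isAuto_gpow_Q_of_imp (hammingDist_map_le_mul (fun x y => (isAuto_gpow_Q_iff.1 hπ x y).2) m)
    (hammingDist_map_le_mul (fun x y => (isAuto_gpow_Q_iff.1 hπ.symm x y).2) m)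

theorem half_hammingDist_map {π : Equiv.Perm (Fin n → Bool)} (hπ : IsAuto (gpow (Q n) 2) π)
    (x y : Fin n → Bool) :
    (hammingDist (π x) (π y) + 1) / 2 = (hammingDist x y + 1) / 2 := by
  have hiff (m : ℕ) := isAuto_gpow_Q_iff.1 (isAuto_gpow_Q_mul hπ m) x y
  have := hiff ((hammingDist x y + 1) / 2)
  have := hiff ((hammingDist (π x) (π y) + 1) / 2)
  omega

theorem isAuto_compl (n p : ℕ) :
    IsAuto (gpow (Q n) p) (compl_involutive.toPerm compl) :=
  isAuto_gpow_Q_iff.2 fun x y => by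
    rw [Function.Involutive.coe_toPerm, hammingDist_compl]

theorem compl_toPerm_ne_one (hn : 0 < n) :
    compl_involutive.toPerm (compl : (Fin n → Bool) → Fin n → Bool) ≠ 1 := fun h => by
  simpa using congrFun (DFunLike.congr_fun h fun _ => true) ⟨0, hn⟩

end Automorphism

section Chain

variable {n : ℕ}

/-- The vertex `1…10…0` of the cube with `i` leading ones; as `i` varies, these form a geodesic
from `0…0` to `1…1`. -/
def chain (i : Fin (n + 1)) : Fin n → Bool := fun k => decide (k.castSucc < i)

theorem hammingDist_chain (i j : Fin (n + 1)) :
    hammingDist (chain i) (chain j) = Nat.dist i j := by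
  have hmap : ({k | chain i k ≠ chain j k} : Finset (Fin n)).map Fin.valEmbedding =
      Finset.Ico (min i j : ℕ) (max i j) := by
    ext k
    simp only [chain, Fin.lt_def, Fin.val_castSucc, ne_eq, decide_eq_decide, Finset.mem_map,
      Finset.mem_filter_univ, Fin.valEmbedding_apply, Finset.mem_Ico]
    refine ⟨?_, fun hk => ⟨⟨k, by omega⟩, by dsimp only; omega, rfl⟩⟩
    rintro ⟨k, hk, rfl⟩
    omega
  rw [hammingDist, ← Finset.card_map, hmap, Nat.card_Ico, Nat.dist]
  omega

theorem chain_injective : Function.Injective (chain (n := n)) := fun i j h => by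
  have hdist := hammingDist_chain i j
  rw [h, hammingDist_self] at hdist
  exact Fin.ext (Nat.eq_of_dist_eq_zero hdist.symm)

theorem flip_chain_castSucc (i : Fin n) : flip (chain i.castSucc) i = chain i.succ := by
  funext k
  by_cases hk : k = i
  · subst hk; simp [chain]
  · have : k.val ≠ i.val := Fin.val_ne_of_ne hk
    simp only [flip_apply_of_ne _ hk, chain, Fin.lt_def, Fin.val_castSucc, Fin.val_succ,
      decide_eq_decide]
    omega

theorem hammingDist_chain_succ_add (x : Fin n → Bool) (i : Fin n) :
    hammingDist x (chain i.succ) + (x i).toNat =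
      hammingDist x (chain i.castSucc) + (!x i).toNat := by
  have hi : chain i.castSucc i = false := by simp [chain]
  rw [← flip_chain_castSucc]
  cases hx : x i
  · exact hammingDist_flip_of_eq (hx.trans hi.symm)
  · exact hammingDist_flip_of_ne (by simp [hx, hi])

theorem eq_or_eq_compl_of_half_hammingDist_chain {x y : Fin n → Bool}
    (h : ∀ i, (hammingDist x (chain i) + 1) / 2 = (hammingDist y (chain i) + 1) / 2) :
    x = y ∨ x = yᶜ := by
  have hstep (i : Fin n) :
      (x i = y i ↔ hammingDist x (chain i.castSucc) = hammingDist y (chain i.castSucc)) ∧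
      (x i = y i ↔ hammingDist x (chain i.succ) = hammingDist y (chain i.succ)) := by
    have hi := h i.castSucc
    have hi' := h i.succ
    have hx := hammingDist_chain_succ_add x i
    have hy := hammingDist_chain_succ_add y i
    cases hxi : x i <;> cases hyi : y i <;>
      simp only [hxi, hyi, Bool.not_true, Bool.not_false, Bool.toNat_true, Bool.toNat_false,
        reduceCtorEq, true_iff, false_iff] at hx hy ⊢ <;>
      omega
  have hconst (i : Fin (n + 1)) : hammingDist x (chain i) = hammingDist y (chain i) ↔
      hammingDist x (chain 0) = hammingDist y (chain 0) := by
    induction i using Fin.induction with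
    | zero => rfl
    | succ i ih => rw [← (hstep i).2, (hstep i).1, ih]
  have hcoord (i : Fin n) := (hstep i).1.trans (hconst _)
  by_cases h0 : hammingDist x (chain 0) = hammingDist y (chain 0)
  · exact .inl (funext fun i => (hcoord i).2 h0)
  · exact .inr (funext fun i => Bool.eq_not.2 (mt (hcoord i).1 h0))

theorem eq_one_of_fixes_chain {π : Equiv.Perm (Fin n → Bool)} (hn : 4 ≤ n)
    (hπ : IsAuto (gpow (Q n) 2) π) (hfix : ∀ i, π (chain i) = chain i) : π = 1 := by
  ext1 x
  rw [Equiv.Perm.one_apply]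
  induction hd : hammingDist x (chain 0) generalizing x with
  | zero => rw [hammingDist_eq_zero.1 hd, hfix]
  | succ d ih =>
    obtain ⟨u, hxu, hu⟩ :=
      exists_hammingDist_eq_and_add_eq (show 1 ≤ hammingDist x (chain 0) by omega)
    have hπu : π u = u := ih u (by omega)
    refine (eq_or_eq_compl_of_half_hammingDist_chain fun i => ?_).resolve_right fun hcompl => ?_
    · rw [← half_hammingDist_map hπ x (chain i), hfix]
    · have hnear := (isAuto_gpow_Q_iff.1 hπ x u).2 (by omega)
      have hfar := hammingDist_compl_left_add x u
      rw [hcompl, hπu] at hnear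
      rw [Fintype.card_fin] at hfar
      omega

end Chain

section SquaredPath

variable {m : ℕ} {f : Fin (m + 1) → ℕ}

theorem map_le_add_two_of_dist_le_two
    (hf : ∀ i j : Fin (m + 1), Nat.dist i j ≤ 2 → Nat.dist (f i) (f j) ≤ 2) {i j : ℕ}
    (hij : i < j) (hj : j < m + 1) (hji : j ≤ i + 2) :
    f ⟨j, hj⟩ ≤ f ⟨i, hij.trans hj⟩ + 2 := by
  have := hf ⟨i, hij.trans hj⟩ ⟨j, hj⟩ (by simp only [Nat.dist]; omega)
  simp only [Nat.dist] at this
  omega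

theorem map_one_eq_one_of_dist_le_two (hm : 4 ≤ m) (hinj : Function.Injective f) (h0 : f 0 = 0)
    (hf : ∀ i j : Fin (m + 1), Nat.dist i j ≤ 2 → Nat.dist (f i) (f j) ≤ 2) :
    f ⟨1, by omega⟩ = 1 := by
  have hne {i j : ℕ} (hij : i < j) (hj : j < m + 1) : f ⟨i, hij.trans hj⟩ ≠ f ⟨j, hj⟩ :=
    hinj.ne (Fin.ne_of_val_ne hij.ne)
  have hpos {j : ℕ} (h0j : 0 < j) (hj : j < m + 1) : f ⟨j, hj⟩ ≠ 0 := fun h =>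
    hne h0j hj (h0.trans h.symm)
  have hle_two {j : ℕ} (h0j : 0 < j) (hj : j ≤ 2) : f ⟨j, by omega⟩ ≤ 2 :=
    (map_le_add_two_of_dist_le_two hf h0j _ (by omega)).trans_eq (congrArg (· + 2) h0)
  by_contra h1
  have h1_eq : f ⟨1, by omega⟩ = 2 := by
    have := hpos (j := 1) (by omega) (by omega)
    have := hle_two (j := 1) (by omega) (by omega)
    omega
  have h2_eq : f ⟨2, by omega⟩ = 1 := by
    have := hpos (j := 2) (by omega) (by omega)
    have := hle_two (j := 2) (by omega) (by omega)
    have := hne (i := 1) (j := 2) (by omega) (by omega)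
    omega
  have heq_three {j : ℕ} (h2j : 2 < j) (hj4 : j ≤ 4) : f ⟨j, by omega⟩ = 3 := by
    have := hpos (j := j) (by omega) (by omega)
    have := hne (i := 1) (j := j) (by omega) (by omega)
    have := hne h2j (by omega)
    have := map_le_add_two_of_dist_le_two hf h2j (by omega) hj4
    omega
  exact hne (i := 3) (j := 4) (by omega) (by omega)
    ((heq_three (by omega) (by omega)).trans (heq_three (by omega) (by omega)).symm)

theorem map_eq_val_of_dist_le_two (hm : 4 ≤ m) (hinj : Function.Injective f) (h0 : f 0 = 0)
    (hf : ∀ i j : Fin (m + 1), Nat.dist i j ≤ 2 → Nat.dist (f i) (f j) ≤ 2) (i : Fin (m + 1)) :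
    f i = i := by
  obtain ⟨i, hi⟩ := i
  induction i using Nat.strong_induction_on with
  | h i ih =>
    obtain _ | _ | i := i
    · exact h0
    · exact map_one_eq_one_of_dist_le_two hm hinj h0 hf
    · have hle : f ⟨i + 2, hi⟩ ≤ i + 2 :=
        (map_le_add_two_of_dist_le_two hf (by omega) hi le_rfl).trans_eq
          (congrArg (· + 2) (ih i (by omega) _))
      refine hle.eq_of_not_lt fun hlt => ?_
      have hsame := hinj (ih _ hlt (hlt.trans hi))
      exact hlt.ne (Fin.val_eq_of_eq hsame)

end SquaredPath

section Marked

variable {n : ℕ}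

/-- The antipode of the chain vertex `1…100`. For `5 ≤ n`, the only chain vertex within distance `2`
of it is `0…0`. -/
def pendant (n : ℕ) : Fin n → Bool := (chain ⟨n - 2, by omega⟩)ᶜ

/-- The colour class of the distinguishing colouring: the chain and the pendant vertex. -/
def markedSet (n : ℕ) : Set (Fin n → Bool) := insert (pendant n) (Set.range chain)

theorem chain_mem_markedSet (i : Fin (n + 1)) : chain i ∈ markedSet n :=
  .inr (Set.mem_range_self i)

theorem hammingDist_pendant_chain_le_two_iff (hn : 5 ≤ n) (i : Fin (n + 1)) :
    hammingDist (pendant n) (chain i) ≤ 2 ↔ i = 0 := by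
  have hadd := hammingDist_compl_left_add (chain ⟨n - 2, by omega⟩) (chain i)
  rw [hammingDist_chain, Fintype.card_fin, ← pendant] at hadd
  simp only [Nat.dist] at hadd
  rw [Fin.ext_iff, Fin.val_zero]
  omega

theorem chain_ne_pendant (hn : 5 ≤ n) (i : Fin (n + 1)) : chain i ≠ pendant n := fun h => by
  have hcard := hammingDist_compl_left_add (chain ⟨n - 2, by omega⟩) (chain i)
  rw [← pendant, h, hammingDist_self, ← h, hammingDist_chain, Fintype.card_fin] at hcard
  simp only [Nat.dist] at hcard
  omega

theorem exists_ne_ne_dist_le_two (hn : 4 ≤ n) (i : Fin (n + 1)) :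
    ∃ j k : Fin (n + 1), j ≠ k ∧ j ≠ i ∧ k ≠ i ∧ Nat.dist i j ≤ 2 ∧ Nat.dist i k ≤ 2 := by
  simp only [Nat.dist, ne_eq, Fin.ext_iff]
  obtain hi | hi := le_total (i + 2 : ℕ) n
  · exact ⟨⟨i + 1, by omega⟩, ⟨i + 2, by omega⟩, by simp only; omega⟩
  · exact ⟨⟨i - 1, by omega⟩, ⟨i - 2, by omega⟩, by simp only; omega⟩

variable {π : Equiv.Perm (Fin n → Bool)}

theorem exists_map_chain_of_ne_pendant (hS : ∀ x, π x ∈ markedSet n ↔ x ∈ markedSet n)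
    {i : Fin (n + 1)} (hi : chain i ≠ π (pendant n)) : ∃ j, π (chain j) = chain i := by
  obtain ⟨x, hx⟩ := π.surjective (chain i)
  obtain rfl | ⟨j, rfl⟩ := (hS x).1 (hx ▸ chain_mem_markedSet i)
  · exact absurd hx.symm hi
  · exact ⟨j, hx⟩

-- Only one other marked vertex is within distance `2` of the pendant vertex, while every chain
-- vertex has two of them.
theorem map_pendant (hn : 5 ≤ n) (hπ : IsAuto (gpow (Q n) 2) π)
    (hS : ∀ x, π x ∈ markedSet n ↔ x ∈ markedSet n) : π (pendant n) = pendant n := by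
  obtain h | ⟨i, hi⟩ := (hS (pendant n)).2 (Set.mem_insert _ _)
  · exact h
  obtain ⟨j, k, hjk, hji, hki, hij, hik⟩ := exists_ne_ne_dist_le_two (by omega) i
  have map_chain_zero {l : Fin (n + 1)} (hli : l ≠ i) (hil : Nat.dist i l ≤ 2) :
      π (chain 0) = chain l := by
    obtain ⟨m, hm⟩ := exists_map_chain_of_ne_pendant hS (hi ▸ chain_injective.ne hli)
    have hnear := (isAuto_gpow_Q_iff.1 hπ (pendant n) (chain m)).1
    rw [← hi, hm, hammingDist_chain, hammingDist_pendant_chain_le_two_iff hn] at hnear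
    rw [← hm, hnear hil]
  exact absurd (chain_injective ((map_chain_zero hji hij).symm.trans (map_chain_zero hki hik))) hjk

theorem eq_one_of_preserves_markedSet (hn : 5 ≤ n) (hπ : IsAuto (gpow (Q n) 2) π)
    (hS : ∀ x, π x ∈ markedSet n ↔ x ∈ markedSet n) : π = 1 := by
  have hpendant := map_pendant hn hπ hS
  have hchain (i : Fin (n + 1)) : ∃ j, chain j = π (chain i) := by
    refine ((hS (chain i)).2 (chain_mem_markedSet i)).resolve_left fun h => ?_
    exact chain_ne_pendant hn i (π.injective (h.trans hpendant.symm))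
  choose f hf using hchain
  have hf_inj : Function.Injective f := fun i j hij =>
    chain_injective (π.injective (by rw [← hf, ← hf, hij]))
  have hf_zero : f 0 = 0 := by
    rw [← hammingDist_pendant_chain_le_two_iff hn, hf]
    nth_rw 1 [← hpendant]
    rw [isAuto_gpow_Q_iff.1 hπ, hammingDist_pendant_chain_le_two_iff hn]
  refine eq_one_of_fixes_chain (by omega) hπ fun i => ?_
  have hval : (f i : ℕ) = i := map_eq_val_of_dist_le_two (f := fun i => f i) (by omega)
    (Fin.val_injective.comp hf_inj) (by simp [hf_zero]) (fun i j hij => ?_) i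
  · rw [← hf, Fin.ext hval]
  · rw [← hammingDist_chain] at hij ⊢
    rw [hf, hf]
    exact (isAuto_gpow_Q_iff.1 hπ _ _).2 hij

end Marked

end Hypercube

theorem stmt_5_general (n p : ℕ) (hp : 0 < p) (hpn : p < n - 1) (hn : 5 ≤ n) :
    distNum (gpow (Q n) p) = 2 :=
  distNum_eq_two (S := Hypercube.markedSet n)
    (fun _ hπ => Hypercube.eq_one_of_preserves_markedSet hn
      (Hypercube.isAuto_gpow_Q_two hp (by omega) hπ))
    (Hypercube.isAuto_compl n p) (Hypercube.compl_toPerm_ne_one (by omega))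

theorem stmt_5 (n p : ℕ) (h1 : 2 < p) (h2 : p < n - 1) :
    distNum (gpow (Q n) p) = 2 := by
  exact stmt_5_general n p (by omega) h2 (by omega)
end

section
/- For n ≥ 2, the distinguishing number of Q_n^{n−1} equals the least positive integer x such that x(x−1)/2 ≥ 2^{n−1}. -/
/-!
Two vertices are nonadjacent in the `(n - 1)`-st power of `Q n` exactly when they are equal or
antipodal, so this power is complete multipartite with `2 ^ (n - 1)` parts of size two. A coloring
of a complete multipartite graph is distinguishing iff it is injective on every part and distinct
parts receive distinct sets of colors: otherwise two vertices of a part, or two whole parts, can be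
exchanged. With parts of size `t` such a coloring amounts to a choice of distinct `t`-subsets of
the colors, one for each part. The complete multipartite graph whose parts are the fibers of
`p : V → ι` is `(⊤ : SimpleGraph ι).comap p`.
-/

open Function Set SimpleGraph

section CompleteMultipartite

variable {V ι α : Type*} {p : V → ι} {r t : ℕ} {c : V → Fin r}

theorem isAuto_comap_top_iff {π : Equiv.Perm V} :
    IsAuto ((⊤ : SimpleGraph ι).comap p) π ↔ ∀ v w, p (π v) = p (π w) ↔ p v = p w := by
  simp only [IsAuto, comap_adj, top_adj, ne_eq, not_iff_not]

theorem IsDistinguishing.injOn_fiber (hc : IsDistinguishing ((⊤ : SimpleGraph ι).comap p) c)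
    (i : ι) : InjOn c (p ⁻¹' {i}) := by
  classical
  intro v hv w hw hvw
  have hp : p v = p w := Eq.trans hv (Eq.symm hw)
  have swap_isAuto : IsAuto ((⊤ : SimpleGraph ι).comap p) (Equiv.swap v w) :=
    isAuto_comap_top_iff.mpr fun x y => by
      rw [Equiv.apply_swap_eq_self hp, Equiv.apply_swap_eq_self hp]
  exact Equiv.swap_eq_one_iff.mp (hc _ swap_isAuto (Equiv.apply_swap_eq_self hvw))

theorem IsDistinguishing.injective_image_fiber (hp : Surjective p)
    (hc : IsDistinguishing ((⊤ : SimpleGraph ι).comap p) c) :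
    Injective fun i => c '' (p ⁻¹' {i}) := by
  classical
  intro i j (hij : c '' (p ⁻¹' {i}) = c '' (p ⁻¹' {j}))
  let σ := Equiv.swap i j
  have image_swap (k : ι) : c '' (p ⁻¹' {σ k}) = c '' (p ⁻¹' {k}) :=
    Equiv.apply_swap_eq_self (v := fun k => c '' (p ⁻¹' {k})) hij k
  have partner (v : V) : ∃ w, p w = σ (p v) ∧ c w = c v :=
    (image_swap (p v)).ge (mem_image_of_mem c rfl)
  choose f hpf hcf using partner
  have hf : Involutive f := fun v =>
    hc.injOn_fiber (p v) (by simp [hpf, σ]) rfl (by rw [hcf, hcf])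
  have hf_one : hf.toPerm = 1 :=
    hc _ (isAuto_comap_top_iff.mpr fun v w => by simp [hpf]) hcf
  obtain ⟨v, rfl⟩ := hp i
  calc p v = p (f v) := congrArg p (DFunLike.congr_fun hf_one v).symm
    _ = σ (p v) := hpf v
    _ = j := Equiv.swap_apply_left _ _

theorem isDistinguishing_comap_top (hinj : ∀ i, InjOn c (p ⁻¹' {i}))
    (himage : Injective fun i => c '' (p ⁻¹' {i})) :
    IsDistinguishing ((⊤ : SimpleGraph ι).comap p) c := by
  intro π hπ hcπ
  rw [isAuto_comap_top_iff] at hπ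
  have part_fixed (v : V) : p (π v) = p v := by
    apply himage
    apply Subset.antisymm
    · rintro _ ⟨w, hw, rfl⟩
      obtain ⟨u, rfl⟩ := π.surjective w
      exact ⟨u, (hπ _ _).mp hw, (hcπ u).symm⟩
    · rintro _ ⟨w, hw, rfl⟩
      exact ⟨π w, (hπ _ _).mpr hw, hcπ w⟩
  ext1 v
  exact hinj (p v) (part_fixed v) rfl (hcπ v)

theorem exists_bijOn_fiber {T : ι → Set α} (e : ∀ i, p ⁻¹' {i} ≃ T i) :
    ∃ f : V → α, ∀ i, BijOn f (p ⁻¹' {i}) (T i) := by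
  let f (v : V) : α := e (p v) ⟨v, rfl⟩
  have f_eq {i : ι} {v : V} (hv : v ∈ p ⁻¹' {i}) : f v = e i ⟨v, hv⟩ := by
    obtain rfl : p v = i := hv
    rfl
  refine ⟨f, fun i => ⟨fun v hv => ?_, fun v hv w hw hvw => ?_, fun a ha => ?_⟩⟩
  · rw [f_eq hv]
    exact Subtype.coe_prop _
  · rw [f_eq hv, f_eq hw] at hvw
    exact congrArg Subtype.val ((e i).injective (Subtype.ext hvw))
  · obtain ⟨⟨v, hv⟩, hva⟩ := (e i).surjective ⟨a, ha⟩
    exact ⟨v, hv, by rw [f_eq hv, hva]⟩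

theorem natCard_subtype_ncard_eq [Finite α] :
    Nat.card {s : Set α // s.ncard = t} = (Nat.card α).choose t := by
  calc Nat.card {s : Set α // s.ncard = t}
    _ = {s : Set α | s ⊆ univ ∧ s.ncard = t}.ncard := by
      simp only [subset_univ, true_and]
      exact Nat.card_coe_set_eq {s : Set α | s.ncard = t}
    _ = (Nat.card α).choose t := by rw [ncard_powerset_ncard finite_univ, ncard_univ]

theorem exists_isDistinguishing_comap_top_iff [Finite ι] (ht : t ≠ 0)
    (hp : ∀ i, (p ⁻¹' {i}).ncard = t) :
    (∃ c : V → Fin r, IsDistinguishing ((⊤ : SimpleGraph ι).comap p) c) ↔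
      Nat.card ι ≤ r.choose t := by
  have fiber_finite (i : ι) : (p ⁻¹' {i}).Finite := finite_of_ncard_ne_zero (hp i ▸ ht)
  have p_surjective : Surjective p := fun i => nonempty_of_ncard_ne_zero (hp i ▸ ht)
  have card_subsets : Nat.card {s : Set (Fin r) // s.ncard = t} = r.choose t := by
    rw [natCard_subtype_ncard_eq, Nat.card_fin]
  rw [← card_subsets]
  constructor
  · rintro ⟨c, hc⟩
    let colors (i : ι) : {s : Set (Fin r) // s.ncard = t} :=
      ⟨c '' (p ⁻¹' {i}), (hc.injOn_fiber i).ncard_image.trans (hp i)⟩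
    exact Nat.card_le_card_of_injective colors fun i j hij =>
      hc.injective_image_fiber p_surjective (congrArg Subtype.val hij)
  · intro h
    obtain ⟨T⟩ : Nonempty (ι ↪ {s : Set (Fin r) // s.ncard = t}) := by
      have := Fintype.ofFinite ι
      have := Fintype.ofFinite {s : Set (Fin r) // s.ncard = t}
      exact Embedding.nonempty_of_card_le (by simpa only [← Nat.card_eq_fintype_card])
    have fiber_equiv (i : ι) : Nonempty (p ⁻¹' {i} ≃ (T i : Set (Fin r))) := by
      have := (fiber_finite i).to_subtype
      exact Finite.card_eq.mp ((hp i).trans (T i).2.symm)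
    obtain ⟨c, hc⟩ := exists_bijOn_fiber fun i => (fiber_equiv i).some
    refine ⟨c, isDistinguishing_comap_top (fun i => (hc i).injOn) fun i j hij => ?_⟩
    simp only [(hc _).image_eq] at hij
    exact T.injective (Subtype.ext hij)

theorem distNum_comap_top [Finite ι] (ht : t ≠ 0) (hp : ∀ i, (p ⁻¹' {i}).ncard = t) :
    distNum ((⊤ : SimpleGraph ι).comap p) = sInf {r : ℕ | Nat.card ι ≤ r.choose t} := by
  simp only [distNum, exists_isDistinguishing_comap_top_iff ht hp]

end CompleteMultipartite

section HammingDist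

variable {ι : Type*} [Fintype ι] {β : ι → Type*} [∀ i, DecidableEq (β i)] {x y : ∀ i, β i}

theorem hammingDist_update_right [DecidableEq ι] {i : ι} {a : β i} (h : x i ≠ a) :
    hammingDist x (update x i a) = 1 := by
  refine Finset.card_eq_one.mpr ⟨i, ?_⟩
  ext j
  obtain rfl | hj := eq_or_ne j i <;> simp [*]

theorem hammingDist_update_add_one [DecidableEq ι] {i : ι} (h : x i ≠ y i) :
    hammingDist (update x i (y i)) y + 1 = hammingDist x y := by
  have erase_eq : ({j | update x i (y i) j ≠ y j} : Finset ι) =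
      ({j | x j ≠ y j} : Finset ι).erase i := by
    ext j
    obtain rfl | hj := eq_or_ne j i <;> simp [*]
  rw [hammingDist, erase_eq, Finset.card_erase_add_one (by simpa using h), hammingDist]

theorem hammingDist_eq_card_iff : hammingDist x y = Fintype.card ι ↔ ∀ i, x i ≠ y i := by
  rw [hammingDist, ← Finset.card_univ, Finset.card_filter_eq_iff]
  simp only [Finset.mem_univ, true_imp_iff]

theorem hammingDist_bool_eq_card_iff {v w : ι → Bool} :
    hammingDist v w = Fintype.card ι ↔ v = wᶜ := by
  simp only [hammingDist_eq_card_iff, funext_iff, Pi.compl_apply]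
  exact forall_congr' fun i => by cases v i <;> cases w i <;> decide

end HammingDist

section Hypercube

variable {n m : ℕ}

theorem hammingDist_le_walk_length {v w : Fin n → Bool} (q : (Q n).Walk v w) :
    hammingDist v w ≤ q.length := by
  induction q with
  | nil => exact (hammingDist_self _).le
  | @cons u v w huv q ih =>
    have hammingDist_eq_one : hammingDist u v = 1 := huv
    have := hammingDist_triangle u v w
    rw [Walk.length_cons]
    lia

theorem exists_walk_length_eq_hammingDist (v w : Fin n → Bool) :
    ∃ q : (Q n).Walk v w, q.length = hammingDist v w := by
  induction hk : hammingDist v w generalizing v with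
  | zero =>
    obtain rfl := hammingDist_eq_zero.mp hk
    exact ⟨.nil, rfl⟩
  | succ k ih =>
    obtain ⟨i, hi⟩ := Function.ne_iff.mp (hammingDist_ne_zero.mp (hk.trans_ne k.succ_ne_zero))
    have hvu : (Q n).Adj v (update v i (w i)) := hammingDist_update_right hi
    obtain ⟨q, hq⟩ := ih (update v i (w i))
      (Nat.succ_injective ((hammingDist_update_add_one hi).trans hk))
    exact ⟨.cons hvu q, by rw [Walk.length_cons, hq]⟩

theorem Q_dist (v w : Fin n → Bool) : (Q n).dist v w = hammingDist v w := by
  obtain ⟨q, hq⟩ := exists_walk_length_eq_hammingDist v w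
  obtain ⟨q', hq'⟩ := q.reachable.exists_walk_length_eq_dist
  exact le_antisymm (hq ▸ dist_le q) (hq' ▸ hammingDist_le_walk_length q')

theorem gpow_Q_adj {k : ℕ} {v w : Fin n → Bool} :
    (gpow (Q n) k).Adj v w ↔ v ≠ w ∧ hammingDist v w ≤ k := by
  obtain ⟨q, -⟩ := exists_walk_length_eq_hammingDist v w
  simp only [gpow, Q_dist, q.reachable, true_and]

/-- The pair `{v, vᶜ}` of antipodal vertices of the hypercube containing `v`, encoded by the last
`m` coordinates of the vertex of the pair whose coordinate `0` is `false`. These pairs are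
the parts of the `m`-th power of `Q (m + 1)`. -/
def antipodalPair (v : Fin (m + 1) → Bool) : Fin m → Bool :=
  fun i => v 0 ^^ v i.succ

theorem antipodalPair_eq_iff {v w : Fin (m + 1) → Bool} :
    antipodalPair v = antipodalPair w ↔ v = w ∨ v = wᶜ := by
  simp only [antipodalPair, funext_iff, Fin.forall_fin_succ, Pi.compl_apply]
  cases v 0 <;> cases w 0 <;> simp

theorem antipodalPair_cons_false (u : Fin m → Bool) :
    antipodalPair (Fin.cons false u : Fin (m + 1) → Bool) = u := by
  ext i
  simp [antipodalPair]

theorem ncard_fiber_antipodalPair (u : Fin m → Bool) : (antipodalPair ⁻¹' {u}).ncard = 2 := by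
  let v : Fin (m + 1) → Bool := Fin.cons false u
  have fiber_eq : antipodalPair ⁻¹' {u} = {v, vᶜ} := by
    ext w
    rw [mem_preimage, mem_singleton_iff, ← antipodalPair_cons_false u, antipodalPair_eq_iff]
    rfl
  rw [fiber_eq, ncard_pair ne_compl_self]

theorem gpow_Q_succ_eq_comap_antipodalPair :
    gpow (Q (m + 1)) m = (⊤ : SimpleGraph (Fin m → Bool)).comap antipodalPair := by
  ext v w
  have hle : hammingDist v w ≤ m ↔ v ≠ wᶜ := by
    have := hammingDist_le_card_fintype (x := v) (y := w)
    rw [Fintype.card_fin] at this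
    rw [Ne, ← hammingDist_bool_eq_card_iff, Fintype.card_fin]
    lia
  rw [gpow_Q_adj, hle, comap_adj, top_adj, Ne, Ne, Ne, antipodalPair_eq_iff, not_or]

end Hypercube

theorem stmt_9 (n : ℕ) (hn : 2 ≤ n) :
    distNum (gpow (Q n) (n - 1)) = sInf {x : ℕ | 0 < x ∧ 2 ^ (n - 1) ≤ x * (x - 1) / 2} := by
  obtain ⟨m, rfl⟩ : ∃ m, n = m + 1 := ⟨n - 1, by lia⟩
  rw [Nat.add_sub_cancel, gpow_Q_succ_eq_comap_antipodalPair,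
    distNum_comap_top two_ne_zero ncard_fiber_antipodalPair]
  congr 1 with x
  have card_parts : Nat.card (Fin m → Bool) = 2 ^ m := by simp
  simp only [mem_ofPred_eq, card_parts, Nat.choose_two_right]
  refine ⟨fun h => ⟨Nat.pos_of_ne_zero ?_, h⟩, And.right⟩
  rintro rfl
  simp at h
end
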